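/- arXiv:1207.2446 — 2 statements merged into one kernel-verified Lean document; each statement's English description precedes it below -/
import Mathlib

section
/- As an identity of formal power series in x_1,…,x_r with integer coefficients: 1/((1−x_1)^r ⋯ (1−x_r)^r) = Σ_{ξ ∈ Par(r)} s_ξ(1,…,1) · s_ξ(x_1,…,x_r), where the sum is over all partitions ξ with at most r parts (for each total degree d only the finitely many ξ with |ξ| = d contribute). -/
/-!
The identity is the Cauchy identity `∏_{i,j} 1/(1 - x_i y_j) = ∑_ξ s_ξ(x) s_ξ(y)` at
`y = (1,…,1)`. The bialternant formula degenerates at that point, so the Cauchy identity is first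
proved with the `y_j` as indeterminates, in power series in the `x_i` over `ℤ[y_1,…,y_r]`, and then
specialized.

In that domain it suffices to prove the identity after multiplication by the two Vandermonde
products `V(x) V(y)`. Both sides are then compared with the series `∑_d det(y_i^(d_j)) x^d`
(`cauchySeries`), which is `det(1/(1 - x_j y_i))` expanded into geometric series.

* `vdm_mul_schurSumGen`: `V(x) V(y) ∑_ξ s_ξ(x) s_ξ(y)` is the sum over `ξ` of products of two
  alternants. An exponent `d` with a repeated entry contributes zero to both series, and one with
  distinct entries is a rearrangement of `ξ + δ`, `δ = (r-1,…,1,0)`, for exactly one `ξ` and one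
  permutation.
* `prod_mul_cauchySeries`: `∏_{i,j} (1 - x_i y_j)` times the same series is `V(x) V(y)`, by Cauchy's
  determinant formula `det_cauchy_numerator`.
-/

/-- The Vandermonde product `∏_{i<j} (x_i - x_j)`. -/
noncomputable def vdm (r : ℕ) : MvPolynomial (Fin r) ℤ :=
  ∏ p ∈ Finset.univ.filter (fun p : Fin r × Fin r => p.1 < p.2),
    (MvPolynomial.X p.1 - MvPolynomial.X p.2)

/-- The matrix `(x_i^{ξ_j + r - j})_{i,j}` (with `j` running from `0` to `r-1`,
so the exponent is `ξ_j + (r - 1 - j)`). -/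
noncomputable def schurMat (r : ℕ) (ξ : Fin r → ℕ) :
    Matrix (Fin r) (Fin r) (MvPolynomial (Fin r) ℤ) :=
  fun i j => MvPolynomial.X i ^ (ξ j + (r - 1 - (j : ℕ)))

/-- `SchurDef r ξ s` says that `s` is the Schur polynomial of `ξ`, i.e. the (unique)
polynomial with `s · ∏_{i<j}(x_i - x_j) = det((x_i^{ξ_j + r - j}))`. -/
def SchurDef (r : ℕ) (ξ : Fin r → ℕ) (s : MvPolynomial (Fin r) ℤ) : Prop :=
  s * vdm r = (schurMat r ξ).det

/-- The power series `Σ_{ξ ∈ Par(r)} s_ξ(1,…,1)·s_ξ(x₁,…,x_r)`, defined coefficientwise: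
at a monomial `d`, only the finitely many partitions `ξ` with `|ξ| = |d|` (and then
necessarily `ξ₁ ≤ |d|`) contribute. -/
noncomputable def schurSum (r : ℕ) (s : (Fin r → ℕ) → MvPolynomial (Fin r) ℤ) :
    MvPowerSeries (Fin r) ℤ :=
  fun d =>
    ∑ ξ : Fin r → Fin ((∑ i, d i) + 1),
      if (∀ i j : Fin r, i ≤ j → (ξ j : ℕ) ≤ (ξ i : ℕ)) ∧ (∑ j, (ξ j : ℕ)) = ∑ i, d i then
        MvPolynomial.eval (fun _ => (1 : ℤ)) (s fun j => (ξ j : ℕ)) *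
          MvPolynomial.coeff d (s fun j => (ξ j : ℕ))
      else 0

open Finset

/-! ### The Cauchy determinant -/

theorem prod_sub_mul_eq_sum {A ι : Type*} [CommRing A] [DecidableEq ι] (S : Finset ι)
    (y : ι → A) (u t : A) :
    ∏ j ∈ S, (u - t * y j) = ∑ m ∈ range (#S + 1),
      t ^ m * u ^ (#S - m) * ∑ T ∈ powersetCard m S, ∏ j ∈ T, (-y j) := by
  have h : ∀ j ∈ S, u - t * y j = t * (-y j) + u := fun j _ => by ring
  rw [prod_congr rfl h, prod_add, sum_powerset]
  refine sum_congr rfl fun m _ => ?_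
  rw [mul_sum]
  refine sum_congr rfl fun T hT => ?_
  obtain ⟨hTS, hc⟩ := mem_powersetCard.1 hT
  rw [prod_mul_distrib, prod_const, prod_const, card_sdiff_of_subset hTS, hc]
  ring

/-- Cauchy's determinant `det(1/(1 - x_i y_k))` with denominators cleared. The forms
`∏_{j ≠ k} (u - t y_j)` have a common coefficient matrix `c`; substituting `(t, u) = (x_i, 1)`
gives the left side as a Vandermonde determinant times `det c`, and substituting
`(t, u) = (1, y_i)` gives a diagonal matrix, which determines `det c`. -/
theorem det_cauchy_numerator {A : Type*} [CommRing A] [IsDomain A] {r : ℕ}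
    (x y : Fin r → A) (hy : Function.Injective y) :
    (Matrix.of fun i k => ∏ j ∈ univ.erase k, (1 - x i * y j)).det =
      (Matrix.projVandermonde 1 x).det * (Matrix.projVandermonde 1 y).det := by
  -- coefficients of `∏_{j ≠ k} (u - t y_j)` as a form in `t, u`
  let c : Matrix (Fin r) (Fin r) A := Matrix.of fun m k =>
    ∑ T ∈ powersetCard (m : ℕ) (univ.erase k), ∏ j ∈ T, (-y j)
  have key : ∀ t u : Fin r → A, Matrix.projVandermonde t u * c =
      Matrix.of fun i k => ∏ j ∈ univ.erase k, (u i - t i * y j) := by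
    intro t u
    ext i k
    have hr : 0 < r := k.pos
    have hcard : #(univ.erase k) = r - 1 := by simp
    rw [Matrix.mul_apply, Matrix.of_apply, prod_sub_mul_eq_sum, hcard, Nat.sub_add_cancel hr,
      ← Fin.sum_univ_eq_sum_range (fun m => t i ^ m * u i ^ (r - 1 - m) *
        ∑ T ∈ powersetCard m (univ.erase k), ∏ j ∈ T, (-y j)) r]
    refine sum_congr rfl fun m _ => ?_
    rw [Matrix.projVandermonde_apply, Fin.val_rev]
    have hm : r - ((m : ℕ) + 1) = r - 1 - m := by omega
    rw [hm]
    rfl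
  have h1 := congrArg Matrix.det (key x 1)
  have h2 := congrArg Matrix.det (key 1 y)
  have hdiag : (Matrix.of fun i k => ∏ j ∈ univ.erase k, (y i - (1 : Fin r → A) i * y j)) =
      Matrix.diagonal fun k => ∏ j ∈ univ.erase k, (y k - y j) := by
    ext i k
    rcases eq_or_ne i k with rfl | h
    · simp
    · rw [Matrix.diagonal_apply_ne _ h, Matrix.of_apply]
      exact prod_eq_zero (mem_erase.2 ⟨h, mem_univ i⟩) (by simp)
  have hdet : ∏ k, ∏ j ∈ univ.erase k, (y k - y j) =
      (∏ i, ∏ j ∈ Ioi i, (y i - y j)) * ∏ i, ∏ j ∈ Ioi i, (y j - y i) := by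
    have hs : ∀ k : Fin r, ∏ j ∈ univ.erase k, (y k - y j) =
        (∏ j ∈ Ioi k, (y k - y j)) * ∏ j ∈ Iio k, (y k - y j) := by
      intro k
      rw [← prod_union (by
        rw [disjoint_left]; intro a; simp only [mem_Ioi, mem_Iio]; exact fun h => h.not_gt)]
      refine prod_congr ?_ fun _ _ => rfl
      ext a
      simp only [mem_erase, mem_univ, mem_union, mem_Ioi, mem_Iio, and_true]
      rw [ne_comm, ne_iff_lt_or_gt]
    rw [prod_congr rfl fun k _ => hs k, prod_mul_distrib]
    congr 1
    exact prod_comm' (by simp)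
  have hne : ∏ i, ∏ j ∈ Ioi i, (y i - y j) ≠ 0 := by
    refine prod_ne_zero_iff.2 fun i _ => prod_ne_zero_iff.2 fun j hj => ?_
    exact sub_ne_zero.2 (hy.ne (mem_Ioi.1 hj).ne)
  rw [hdiag, Matrix.det_diagonal, hdet, Matrix.det_mul, Matrix.det_projVandermonde] at h2
  have h3 : c.det = ∏ i, ∏ j ∈ Ioi i, (y j - y i) := by
    refine mul_left_cancel₀ hne ?_
    simpa using h2
  rw [Matrix.det_mul, h3] at h1
  simp only [Pi.one_apply] at h1
  rw [← h1]
  simp only [Matrix.det_projVandermonde, Pi.one_apply, one_mul, mul_one, ← prod_mul_distrib]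
  refine prod_congr rfl fun i _ => prod_congr rfl fun j _ => ?_
  ring

/-! ### Alternants -/

theorem vdm_eq_det (r : ℕ) : vdm r =
    (Matrix.projVandermonde 1 (MvPolynomial.X : Fin r → MvPolynomial (Fin r) ℤ)).det := by
  rw [Matrix.det_projVandermonde, vdm]
  simp only [Pi.one_apply, one_mul, prod_sigma']
  refine prod_bij' (fun p _ => ⟨p.1, p.2⟩) (fun p _ => (p.1, p.2)) ?_ ?_ ?_ ?_ ?_ <;> simp

theorem vdm_eq_det_schurMat (r : ℕ) : vdm r = (schurMat r 0).det := by
  rw [vdm_eq_det]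
  congr 1
  refine Matrix.ext fun i j => ?_
  simp only [Matrix.projVandermonde_apply, schurMat, Fin.val_rev, Pi.one_apply, one_pow, one_mul,
    Pi.zero_apply, zero_add]
  congr 1
  omega

/-- The coefficient of `x^d` in `det(x_i^(ξ_j + r - 1 - j))` is the signed count of the
permutations that rearrange `d` into the exponent sequence of `ξ`. -/
theorem coeff_det_schurMat (r : ℕ) (ξ : Fin r → ℕ) (d : Fin r →₀ ℕ) :
    MvPolynomial.coeff d (schurMat r ξ).det = ∑ σ : Equiv.Perm (Fin r),
      if ∀ i, d (σ i) = ξ i + (r - 1 - (i : ℕ)) then (Equiv.Perm.sign σ : ℤ) else 0 := by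
  rw [Matrix.det_apply', MvPolynomial.coeff_sum]
  refine sum_congr rfl fun σ _ => ?_
  have h1 : ∏ i, schurMat r ξ (σ i) i = MvPolynomial.monomial
      (Finsupp.equivFunOnFinite.symm fun i => ξ (σ.symm i) + (r - 1 - (σ.symm i : ℕ))) 1 := by
    rw [MvPolynomial.monomial_eq, Finsupp.prod_fintype _ _ (by simp), MvPolynomial.C_1, one_mul,
      ← Equiv.prod_comp σ (fun i => (MvPolynomial.X i : MvPolynomial (Fin r) ℤ) ^ _)]
    simp [schurMat]
  rw [h1, ← map_intCast (MvPolynomial.C : ℤ →+* MvPolynomial (Fin r) ℤ), MvPolynomial.coeff_C_mul, MvPolynomial.coeff_monomial]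
  have : (Finsupp.equivFunOnFinite.symm fun i => ξ (σ.symm i) + (r - 1 - (σ.symm i : ℕ))) = d ↔
      ∀ i, d (σ i) = ξ i + (r - 1 - (i : ℕ)) := by
    rw [Finsupp.ext_iff]
    constructor
    · intro h i
      simpa using (h (σ i)).symm
    · intro h i
      simpa using (h (σ.symm i)).symm
  simp [this]

/-! ### The series of the Cauchy determinant -/

/-- The series `∏_i 1/(1 - a_i x_i) = ∑_d (∏_i a_i ^ d_i) x^d`. -/
def geomSeries {A σ : Type*} [CommRing A] [Fintype σ] (a : σ → A) : MvPowerSeries σ A :=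
  fun d => ∏ i, a i ^ d i

theorem prod_one_sub_mul_geomSeries {A σ : Type*} [CommRing A] [Fintype σ] [DecidableEq σ]
    (a : σ → A) :
    (∏ i, (1 - MvPowerSeries.X i * MvPowerSeries.C (a i))) * geomSeries a = 1 := by
  have key : ∀ (S : Finset σ) (d : σ →₀ ℕ), MvPowerSeries.coeff d
      ((∏ i ∈ S, (1 - MvPowerSeries.X i * MvPowerSeries.C (a i))) * geomSeries a) =
        if ∀ i ∈ S, d i = 0 then ∏ i, a i ^ d i else 0 := by
    intro S
    induction S using Finset.induction_on with
    | empty => intro d; simp [geomSeries, MvPowerSeries.coeff_apply]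
    | insert k S hk ih =>
      intro d
      rw [prod_insert hk, mul_assoc]
      have hX : (MvPowerSeries.X k : MvPowerSeries σ A) * MvPowerSeries.C (a k) =
          MvPowerSeries.monomial (Finsupp.single k 1) (a k) := by
        rw [MvPowerSeries.X_def, ← MvPowerSeries.monomial_zero_eq_C_apply,
          MvPowerSeries.monomial_mul_monomial]
        simp
      rw [sub_mul, one_mul, hX, map_sub, MvPowerSeries.coeff_monomial_mul, ih, ih]
      simp only [Finsupp.single_le_iff, forall_mem_insert]
      by_cases hd : d k = 0
      · simp [hd]
      · have h1 : 1 ≤ d k := Nat.one_le_iff_ne_zero.2 hd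
        have h2 : (∀ i ∈ S, (d - Finsupp.single k 1 : σ →₀ ℕ) i = 0) ↔ ∀ i ∈ S, d i = 0 := by
          refine forall₂_congr fun i hi => ?_
          have : k ≠ i := fun h => hk (h ▸ hi)
          simp [this]
        have h3 : a k * ∏ i, a i ^ (d - Finsupp.single k 1 : σ →₀ ℕ) i = ∏ i, a i ^ d i := by
          rw [← mul_prod_erase univ _ (mem_univ k), ← mul_prod_erase univ _ (mem_univ k),
            ← mul_assoc, ← pow_succ']
          congr 1
          · simp [Nat.sub_add_cancel h1]
          · refine prod_congr rfl fun i hi => ?_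
            simp [(ne_of_mem_erase hi).symm]
        simp only [h1, if_true, h2, hd, false_and, if_false]
        split_ifs
        · rw [h3, sub_self]
        · simp
  ext d
  rw [key univ, MvPowerSeries.coeff_one]
  by_cases hd : d = 0
  · simp [hd]
  · have : ¬ ∀ i ∈ (univ : Finset σ), d i = 0 := fun h => hd (Finsupp.ext fun i => h i (mem_univ i))
    rw [if_neg this, if_neg hd]

/-- The series `∑_d det(y_i ^ d_j) x^d`, i.e. `det(1/(1 - x_j y_i))`, with the `y_i` taken as
polynomial indeterminates of the coefficient ring. -/
noncomputable def cauchySeries (r : ℕ) : MvPowerSeries (Fin r) (MvPolynomial (Fin r) ℤ) :=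
  fun d => (Matrix.of fun i j : Fin r =>
    (MvPolynomial.X i : MvPolynomial (Fin r) ℤ) ^ d j).det

/-- The Cauchy determinant identity in the ring of power series in `x` over `ℤ[y]`. -/
theorem prod_mul_cauchySeries (r : ℕ) :
    (∏ i : Fin r, ∏ j : Fin r, (1 - MvPowerSeries.X i *
      MvPowerSeries.C (MvPolynomial.X j : MvPolynomial (Fin r) ℤ))) * cauchySeries r =
    MvPowerSeries.map MvPolynomial.C (vdm r : MvPowerSeries (Fin r) ℤ) *
      MvPowerSeries.C (vdm r) := by
  have hF : cauchySeries r = ∑ σ : Equiv.Perm (Fin r), ((Equiv.Perm.sign σ : ℤ) :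
      MvPowerSeries (Fin r) (MvPolynomial (Fin r) ℤ)) *
        geomSeries fun i => MvPolynomial.X (σ i) := by
    ext1 d
    rw [map_sum, MvPowerSeries.coeff_apply, cauchySeries, Matrix.det_apply']
    refine sum_congr rfl fun σ _ => ?_
    rw [← map_intCast (MvPowerSeries.C : MvPolynomial (Fin r) ℤ →+* _), MvPowerSeries.coeff_C_mul]
    rfl
  have hinj : Function.Injective fun j : Fin r =>
      (MvPowerSeries.C (MvPolynomial.X j) :
        MvPowerSeries (Fin r) (MvPolynomial (Fin r) ℤ)) :=
    MvPowerSeries.C_injective.comp (MvPolynomial.X_injective)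
  have : IsDomain (MvPowerSeries (Fin r) (MvPolynomial (Fin r) ℤ)) :=
    NoZeroDivisors.to_isDomain _
  have hdet := det_cauchy_numerator
    (fun i : Fin r => (MvPowerSeries.X i : MvPowerSeries (Fin r) (MvPolynomial (Fin r) ℤ))) _ hinj
  have hx : MvPowerSeries.map MvPolynomial.C (vdm r : MvPowerSeries (Fin r) ℤ) =
      (Matrix.projVandermonde 1 fun i : Fin r =>
        (MvPowerSeries.X i : MvPowerSeries (Fin r) (MvPolynomial (Fin r) ℤ))).det := by
    rw [vdm_eq_det, ← MvPolynomial.coeToMvPowerSeries.ringHom_apply]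
    simp only [Matrix.det_projVandermonde, map_prod, map_sub, Pi.one_apply, one_mul,
      MvPolynomial.coeToMvPowerSeries.ringHom_apply, MvPolynomial.coe_X, MvPowerSeries.map_X]
  have hy : (MvPowerSeries.C (vdm r) : MvPowerSeries (Fin r) (MvPolynomial (Fin r) ℤ)) =
      (Matrix.projVandermonde 1 fun j : Fin r =>
        (MvPowerSeries.C (MvPolynomial.X j) :
          MvPowerSeries (Fin r) (MvPolynomial (Fin r) ℤ))).det := by
    rw [vdm_eq_det]
    simp [Matrix.det_projVandermonde, map_prod]
  rw [hx, hy, ← hdet, ← Matrix.det_transpose, Matrix.det_apply', hF, mul_sum]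
  refine sum_congr rfl fun σ _ => ?_
  have h1 := prod_one_sub_mul_geomSeries
    (fun i : Fin r => (MvPolynomial.X (σ i) : MvPolynomial (Fin r) ℤ))
  rw [prod_congr rfl fun i _ => (mul_prod_erase univ _ (mem_univ (σ i))).symm, prod_mul_distrib]
  simp only [Matrix.transpose_apply, Matrix.of_apply]
  linear_combination (((Equiv.Perm.sign σ : ℤ) :
      MvPowerSeries (Fin r) (MvPolynomial (Fin r) ℤ)) * ∏ i, ∏ j ∈ univ.erase (σ i),
        (1 - MvPowerSeries.X i * MvPowerSeries.C (MvPolynomial.X j))) * h1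

/-! ### The sum of products of Schur polynomials -/

/-- The Vandermonde product is homogeneous of degree `r(r-1)/2`. -/
theorem sum_eq_of_coeff_vdm_ne_zero {r : ℕ} {a : Fin r →₀ ℕ}
    (h : MvPolynomial.coeff a (vdm r) ≠ 0) : ∑ i, a i = ∑ i : Fin r, (r - 1 - (i : ℕ)) := by
  rw [vdm_eq_det_schurMat, coeff_det_schurMat] at h
  obtain ⟨σ, -, hσ⟩ := exists_ne_zero_of_sum_ne_zero h
  have h1 : ∀ i, a (σ i) = (0 : Fin r → ℕ) i + (r - 1 - (i : ℕ)) := by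
    by_contra h2
    exact hσ (if_neg h2)
  rw [← Equiv.sum_comp σ]
  simp [h1]

/-- The partitions `ξ` with at most `r` parts and `|ξ| + r(r-1)/2 = |d|`, as a finite set.
The bound `ξ_i ≤ |d|` is implied and only serves to make finiteness evident. -/
def shiftedParts (r : ℕ) (d : Fin r →₀ ℕ) : Finset (Fin r → ℕ) :=
  (Fintype.piFinset fun _ : Fin r => range ((∑ i, d i) + 1)).filter fun ξ =>
    (∀ i j : Fin r, i ≤ j → ξ j ≤ ξ i) ∧
      (∑ j, ξ j) + ∑ i : Fin r, (r - 1 - (i : ℕ)) = ∑ i, d i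

/-- The sum over bounded tuples in the coefficients of `schurSum`, rewritten over an index set
depending only on `d` (not on the degree `n = |d| - r(r-1)/2`). -/
theorem sum_fin_eq_sum_shiftedParts {A : Type*} [AddCommMonoid A] {r n : ℕ} {d : Fin r →₀ ℕ}
    (hn : n + ∑ i : Fin r, (r - 1 - (i : ℕ)) = ∑ i, d i) (f : (Fin r → ℕ) → A) :
    (∑ ξ : Fin r → Fin (n + 1),
      if (∀ i j : Fin r, i ≤ j → (ξ j : ℕ) ≤ (ξ i : ℕ)) ∧ (∑ j, (ξ j : ℕ)) = n then
        f (fun j => (ξ j : ℕ)) else 0) = ∑ ξ ∈ shiftedParts r d, f ξ := by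
  rw [← sum_filter]
  refine sum_bij (fun ξ _ j => (ξ j : ℕ)) ?_ ?_ ?_ fun _ _ => rfl
  · intro ξ hξ
    obtain ⟨-, h1, h2⟩ := mem_filter.1 hξ
    refine mem_filter.2 ⟨Fintype.mem_piFinset.2 fun i => mem_range.2 ?_, h1, by rw [h2, hn]⟩
    have := (ξ i).2
    omega
  · intro ξ _ η _ h
    exact funext fun i => Fin.ext (congrFun h i)
  · intro ξ hξ
    obtain ⟨-, h1, h2⟩ := mem_filter.1 hξ
    have h3 : ∑ j, ξ j = n := by omega
    have h4 : ∀ j, ξ j < n + 1 := fun j => by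
      have := single_le_sum (f := ξ) (fun _ _ => Nat.zero_le _) (mem_univ j)
      omega
    exact ⟨fun j => ⟨ξ j, h4 j⟩, mem_filter.2 ⟨mem_univ _, h1, h3⟩, rfl⟩

/-- The series `∑_ξ s_ξ(y) s_ξ(x)` in the `x_i`, with the `y_i` taken as polynomial
indeterminates of the coefficient ring; `schurSum` is its specialization at `y = (1,…,1)`. -/
noncomputable def schurSumGen (r : ℕ) (s : (Fin r → ℕ) → MvPolynomial (Fin r) ℤ) :
    MvPowerSeries (Fin r) (MvPolynomial (Fin r) ℤ) :=
  fun d =>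
    ∑ ξ : Fin r → Fin ((∑ i, d i) + 1),
      if (∀ i j : Fin r, i ≤ j → (ξ j : ℕ) ≤ (ξ i : ℕ)) ∧ (∑ j, (ξ j : ℕ)) = ∑ i, d i then
        s (fun j => (ξ j : ℕ)) * MvPolynomial.C (MvPolynomial.coeff d (s fun j => (ξ j : ℕ)))
      else 0

theorem map_eval_schurSumGen (r : ℕ) (s : (Fin r → ℕ) → MvPolynomial (Fin r) ℤ) :
    MvPowerSeries.map (MvPolynomial.eval fun _ => (1 : ℤ)) (schurSumGen r s) = schurSum r s := by
  ext d
  rw [MvPowerSeries.coeff_map, MvPowerSeries.coeff_apply, MvPowerSeries.coeff_apply,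
    schurSumGen, schurSum, map_sum]
  refine sum_congr rfl fun ξ _ => ?_
  split_ifs
  · rw [map_mul, MvPolynomial.eval_C]
  · rw [map_zero]

/-- Since the Vandermonde product is homogeneous, all terms of the convolution for `x^d` involve
the partitions in `shiftedParts r d`, so the sum of Schur polynomials may be multiplied out
termwise. -/
theorem coeff_vdm_mul_schurSumGen (r : ℕ) (s : (Fin r → ℕ) → MvPolynomial (Fin r) ℤ)
    (hs : ∀ ξ : Fin r → ℕ, SchurDef r ξ (s ξ)) (d : Fin r →₀ ℕ) :
    MvPowerSeries.coeff d (MvPowerSeries.map MvPolynomial.C (vdm r : MvPowerSeries (Fin r) ℤ) *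
      schurSumGen r s) = ∑ ξ ∈ shiftedParts r d,
        s ξ * MvPolynomial.C (MvPolynomial.coeff d (schurMat r ξ).det) := by
  have h1 : ∀ p ∈ antidiagonal d, MvPowerSeries.coeff p.1
      (MvPowerSeries.map MvPolynomial.C (vdm r : MvPowerSeries (Fin r) ℤ)) *
        MvPowerSeries.coeff p.2 (schurSumGen r s) =
      ∑ ξ ∈ shiftedParts r d, s ξ * MvPolynomial.C
        (MvPolynomial.coeff p.2 (s ξ) * MvPolynomial.coeff p.1 (vdm r)) := by
    rintro ⟨a, b⟩ hp
    rw [MvPowerSeries.coeff_map, MvPolynomial.coeff_coe]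
    by_cases ha : MvPolynomial.coeff a (vdm r) = 0
    · simp [ha]
    · have hN := sum_eq_of_coeff_vdm_ne_zero ha
      have hab : ∑ i, b i + ∑ i : Fin r, (r - 1 - (i : ℕ)) = ∑ i, d i := by
        rw [← hN, ← mem_antidiagonal.1 hp, add_comm, ← sum_add_distrib]
        rfl
      rw [MvPowerSeries.coeff_apply, schurSumGen, sum_fin_eq_sum_shiftedParts hab
        (fun ξ => s ξ * MvPolynomial.C (MvPolynomial.coeff b (s ξ))), mul_sum]
      refine sum_congr rfl fun ξ _ => ?_
      rw [map_mul]
      ring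
  rw [MvPowerSeries.coeff_mul, sum_congr rfl h1, sum_comm]
  refine sum_congr rfl fun ξ _ => ?_
  rw [← hs ξ, mul_comm (s ξ) (vdm r), MvPolynomial.coeff_mul, map_sum, mul_sum]
  refine sum_congr rfl fun p _ => ?_
  rw [mul_comm (MvPolynomial.coeff p.2 _)]

/-- A tuple `d` with distinct entries can be sorted in exactly one way into the form `ξ + δ`,
with `ξ` a partition and `δ = (r-1, …, 1, 0)`. -/
theorem sum_perm_shiftedParts_eq_one {r : ℕ} {d : Fin r →₀ ℕ} (hd : Function.Injective d) :
    (∑ σ : Equiv.Perm (Fin r), ∑ ξ ∈ shiftedParts r d,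
      if ∀ i, d (σ i) = ξ i + (r - 1 - (i : ℕ)) then (1 : MvPolynomial (Fin r) ℤ) else 0) = 1 := by
  let τ : Equiv.Perm (Fin r) := Fin.revPerm.trans (Tuple.sort d)
  have hτ : StrictAnti (d ∘ τ) := by
    have h : StrictMono (d ∘ Tuple.sort d) :=
      (Tuple.monotone_sort d).strictMono_of_injective (hd.comp (Tuple.sort d).injective)
    intro i j hij
    exact h (Fin.rev_lt_rev.2 hij)
  -- strict decrease makes the entries exceed those of `δ`, with weakly decreasing difference
  have hge : ∀ i j : Fin r, i ≤ j → d (τ j) + ((j : ℕ) - i) ≤ d (τ i) := by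
    intro i j
    obtain ⟨j, hj⟩ := j
    induction j with
    | zero => intro h; have : i = ⟨0, hj⟩ := le_antisymm h (Nat.zero_le _); simp [this]
    | succ j ih =>
      intro h
      rcases h.eq_or_lt with h | h
      · simp [h]
      · have h1 := ih (by omega) (Fin.le_def.2 (Nat.lt_succ_iff.1 h))
        have h2 : d (τ ⟨j + 1, hj⟩) < d (τ ⟨j, by omega⟩) := hτ (Fin.lt_def.2 (Nat.lt_succ_self j))
        have h3 : (i : ℕ) ≤ j := Nat.lt_succ_iff.1 h
        simp only at h1 ⊢
        omega
  have hδ : ∀ i : Fin r, r - 1 - (i : ℕ) ≤ d (τ i) := fun i => by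
    have hi := i.2
    have := hge i ⟨r - 1, by omega⟩ (Fin.le_def.2 (by simp only; omega))
    simp only at this
    omega
  let η : Fin r → ℕ := fun i => d (τ i) - (r - 1 - (i : ℕ))
  have hη : ∀ i, d (τ i) = η i + (r - 1 - (i : ℕ)) := fun i => (Nat.sub_add_cancel (hδ i)).symm
  have hsum : (∑ j, η j) + ∑ i : Fin r, (r - 1 - (i : ℕ)) = ∑ i, d i := by
    rw [← sum_add_distrib, ← Equiv.sum_comp τ d]
    exact sum_congr rfl fun i _ => (hη i).symm
  have hmem : η ∈ shiftedParts r d := by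
    refine mem_filter.2 ⟨Fintype.mem_piFinset.2 fun i => mem_range.2 ?_, fun i j hij => ?_, hsum⟩
    · have := single_le_sum (f := η) (fun _ _ => Nat.zero_le _) (mem_univ i)
      omega
    · have h1 := hge i j hij
      have h2 := hη i
      have h3 := hη j
      have h4 := j.2
      have h5 : (i : ℕ) ≤ j := hij
      omega
  have huniq : ∀ σ : Equiv.Perm (Fin r), ∀ ξ ∈ shiftedParts r d,
      (∀ i, d (σ i) = ξ i + (r - 1 - (i : ℕ))) → σ = τ ∧ ξ = η := by
    intro σ ξ hξ h
    have hanti : Antitone (d ∘ σ) := fun i j hij => by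
      have h1 := (mem_filter.1 hξ).2.1 i j hij
      have h2 : (i : ℕ) ≤ j := hij
      simp only [Function.comp_apply, h]
      omega
    have h1 := Tuple.unique_antitone hanti hτ.antitone
    have h2 : σ = τ := Equiv.ext fun i => hd (congrFun h1 i)
    refine ⟨h2, funext fun i => ?_⟩
    have h3 := h i
    rw [h2, hη i] at h3
    omega
  rw [sum_eq_single τ, sum_eq_single η, if_pos hη]
  · intro ξ hξ hne
    exact if_neg fun h => hne (huniq τ ξ hξ h).2
  · exact fun h => absurd hmem h
  · intro σ _ hne
    exact sum_eq_zero fun ξ hξ => if_neg fun h => hne (huniq σ ξ hξ h).1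
  · exact fun h => absurd (mem_univ _) h

/-- The Cauchy–Binet step: `∑_ξ det(x_i^(ξ_j+δ_j)) det(y_i^(ξ_j+δ_j)) = ∑_d det(y_i^(d_j)) x^d`,
where `δ_j = r - 1 - j`. -/
theorem vdm_mul_schurSumGen (r : ℕ) (s : (Fin r → ℕ) → MvPolynomial (Fin r) ℤ)
    (hs : ∀ ξ : Fin r → ℕ, SchurDef r ξ (s ξ)) :
    MvPowerSeries.map MvPolynomial.C (vdm r : MvPowerSeries (Fin r) ℤ) *
      MvPowerSeries.C (vdm r) * schurSumGen r s = cauchySeries r := by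
  ext1 d
  rw [mul_comm _ (MvPowerSeries.C (vdm r)), mul_assoc, MvPowerSeries.coeff_C_mul,
    coeff_vdm_mul_schurSumGen r s hs, mul_sum, MvPowerSeries.coeff_apply, cauchySeries]
  set D : Matrix (Fin r) (Fin r) (MvPolynomial (Fin r) ℤ) :=
    Matrix.of fun i j : Fin r => (MvPolynomial.X i : MvPolynomial (Fin r) ℤ) ^ d j with hD
  have h1 : ∀ ξ ∈ shiftedParts r d,
      vdm r * (s ξ * MvPolynomial.C (MvPolynomial.coeff d (schurMat r ξ).det)) =
      ∑ σ : Equiv.Perm (Fin r), (if ∀ i, d (σ i) = ξ i + (r - 1 - (i : ℕ)) then 1 else 0) *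
        D.det := by
    intro ξ _
    rw [← mul_assoc, mul_comm (vdm r), hs ξ, coeff_det_schurMat, map_sum, mul_sum]
    refine sum_congr rfl fun σ _ => ?_
    split_ifs with h
    · have h2 : schurMat r ξ = D.submatrix id σ := by
        refine Matrix.ext fun i j => ?_
        simp [schurMat, hD, h]
      rw [h2, Matrix.det_permute', one_mul, mul_right_comm]
      rcases Int.units_eq_one_or (Equiv.Perm.sign σ) with h3 | h3 <;> simp [h3]
    · simp
  rw [sum_congr rfl h1, sum_comm]
  simp only [← sum_mul]
  by_cases hd : Function.Injective d
  · rw [sum_perm_shiftedParts_eq_one hd, one_mul]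
  · obtain ⟨i, j, hij, hne⟩ : ∃ i j, d i = d j ∧ i ≠ j := by
      simpa [Function.Injective] using hd
    rw [Matrix.det_zero_of_column_eq hne fun k => by simp [hD, hij], mul_zero]

/-- As formal power series in `x₁,…,x_r` over `ℤ`:
`1/((1-x₁)^r ⋯ (1-x_r)^r) = Σ_{ξ ∈ Par(r)} s_ξ(1,…,1)·s_ξ(x₁,…,x_r)`. -/
theorem stmt2 (r : ℕ) (s : (Fin r → ℕ) → MvPolynomial (Fin r) ℤ)
    (hs : ∀ ξ : Fin r → ℕ, SchurDef r ξ (s ξ)) :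
    (∏ i : Fin r, (1 - MvPowerSeries.X i) ^ r) * schurSum r s = 1 := by
  have hvdm : vdm r ≠ 0 := by
    refine prod_ne_zero_iff.2 fun p hp => sub_ne_zero.2 fun h => ?_
    exact (mem_filter.1 hp).2.ne (MvPolynomial.X_injective h)
  have hne : MvPowerSeries.map MvPolynomial.C (vdm r : MvPowerSeries (Fin r) ℤ) *
      (MvPowerSeries.C (vdm r) : MvPowerSeries (Fin r) (MvPolynomial (Fin r) ℤ)) ≠ 0 := by
    refine mul_ne_zero (fun h => hvdm ?_) fun h => hvdm ?_
    · refine MvPolynomial.ext _ _ fun d => ?_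
      have h1 := congrArg (MvPowerSeries.coeff d) h
      rw [MvPowerSeries.coeff_map, MvPolynomial.coeff_coe, map_zero] at h1
      simpa using h1
    · exact MvPowerSeries.C_injective (h.trans (map_zero _).symm)
  have hgen : (∏ i : Fin r, ∏ j : Fin r, (1 - MvPowerSeries.X i *
      MvPowerSeries.C (MvPolynomial.X j : MvPolynomial (Fin r) ℤ))) * schurSumGen r s = 1 := by
    refine mul_left_cancel₀ hne ?_
    rw [mul_one, mul_left_comm, vdm_mul_schurSumGen r s hs, prod_mul_cauchySeries]
  have h := congrArg (MvPowerSeries.map (MvPolynomial.eval fun _ => (1 : ℤ))) hgen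
  rw [map_mul, map_eval_schurSumGen, map_one] at h
  simpa [map_prod] using h
end

section
/- As an identity of formal power series in the 2r variables x_1,…,x_r, y_1,…,y_r with integer coefficients: (1 − x_1⋯x_r·y_1⋯y_r)/∏_{1≤i,j≤r}(1 − x_i y_j) = Σ_{λ ∈ Par(r−1)} s_λ(x_1,…,x_r) · s_λ(y_1,…,y_r), where the sum is over all partitions λ with at most r−1 parts. -/
/-- The power series `Σ_{λ ∈ Par(r-1)} s_λ(x₁,…,x_r)·s_λ(y₁,…,y_r)` in the `2r`
variables `x₁,…,x_r` (`Sum.inl`) and `y₁,…,y_r` (`Sum.inr`), defined coefficientwise: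
at a monomial `d`, only the finitely many partitions `λ` with at most `r-1` parts and
`|λ| = (x`-degree of `d)` contribute. -/
noncomputable def schurSum2 (r : ℕ) (s : (Fin r → ℕ) → MvPolynomial (Fin r) ℤ) :
    MvPowerSeries (Fin r ⊕ Fin r) ℤ :=
  fun d =>
    ∑ ξ : Fin r → Fin ((∑ i, d (Sum.inl i)) + 1),
      if (∀ i j : Fin r, i ≤ j → (ξ j : ℕ) ≤ (ξ i : ℕ)) ∧
          (∀ h : r - 1 < r, (ξ ⟨r - 1, h⟩ : ℕ) = 0) ∧
          (∑ j, (ξ j : ℕ)) = ∑ i, d (Sum.inl i) then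
        MvPolynomial.coeff d
          (MvPolynomial.rename Sum.inl (s fun j => (ξ j : ℕ)) *
            MvPolynomial.rename Sum.inr (s fun j => (ξ j : ℕ)))
      else 0


/-! ### Cauchy's determinant -/

/-- Cauchy's double alternant, for a ring in which every `1 - a i * b j` has an inverse `e i j`. -/
theorem det_cauchy_inv {R : Type*} [CommRing R] (n : ℕ) (a b : Fin n → R)
    (e : Fin n → Fin n → R) (he : ∀ i j, e i j * (1 - a i * b j) = 1) :
    (Matrix.of e).det = (∏ i, ∏ j, e i j) *
      ((∏ i, ∏ j ∈ Finset.Ioi i, (a j - a i)) * ∏ i, ∏ j ∈ Finset.Ioi i, (b j - b i)) := by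
  induction n with
  | zero => simp
  | succ n ih =>
    -- Clearing the first column by row operations leaves a rescaled Cauchy matrix of smaller size.
    let c : Fin (n + 1) → R := Fin.cons 0 fun i => e i.succ 0 * (1 - a 0 * b 0)
    let B : Matrix (Fin (n + 1)) (Fin (n + 1)) R := fun i j => e i j - c i * e 0 j
    have hB0 : ∀ j, B 0 j = e 0 j := fun j => by simp [B, c]
    have hAB : (Matrix.of e).det = B.det := by
      refine Matrix.det_eq_of_forall_row_eq_smul_add_const c 0 rfl fun i j => ?_
      rw [hB0]; simp [B]
    have hcol : ∀ i : Fin n, B i.succ 0 = 0 := fun i => by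
      simp only [B, c, Fin.cons_succ]
      linear_combination (-e i.succ 0) * he 0 0
    have hsub : B.submatrix Fin.succ Fin.succ = Matrix.of fun i j : Fin n =>
        (e i.succ 0 * (a i.succ - a 0)) * (Matrix.of fun i j : Fin n =>
          (e 0 j.succ * (b j.succ - b 0)) *
            (Matrix.of fun i j : Fin n => e i.succ j.succ) i j) i j := by
      ext i j
      simp only [Matrix.submatrix_apply, Matrix.of_apply]
      simp only [B, c, Fin.cons_succ]
      have h1 := he i.succ j.succ
      have h2 := he i.succ 0
      have h3 := he 0 j.succ
      linear_combination (-e i.succ 0 * e 0 j.succ * (1 - a 0 * b 0)) * (-h1)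
        + (-e i.succ j.succ * e 0 j.succ * (1 - a 0 * b j.succ)) * h2 - e i.succ j.succ * h3
    rw [hAB, Matrix.det_succ_column_zero, Fin.sum_univ_succ]
    simp only [hcol, Fin.succAbove_zero, hB0]
    rw [hsub, Matrix.det_mul_column, Matrix.det_mul_row,
      ih (fun i => a i.succ) (fun i => b i.succ) (fun i j => e i.succ j.succ)
        (fun i j => he _ _)]
    simp only [Fin.prod_univ_succ, Fin.prod_Ioi_zero, Fin.prod_Ioi_succ, Finset.prod_mul_distrib]
    simp only [mul_zero, zero_mul, Finset.sum_const_zero, Fin.val_zero, pow_zero]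
    ring

/-! ### The Cauchy–Binet expansion -/

/-- The alternant `det (a_i ^ k_j)`. -/
noncomputable def alternant {A : Type*} [CommRing A] {r : ℕ} (a : Fin r → A) (k : Fin r → ℕ) : A :=
  (Matrix.of fun i j : Fin r => a i ^ k j).det

/-- The strictly decreasing sequences of natural numbers of length `r` and sum `n`. -/
noncomputable def strictSeqs (r n : ℕ) : Finset (Fin r → ℕ) :=
  open Classical in (Finset.piAntidiag Finset.univ n).filter StrictAnti

theorem mem_strictSeqs {r n : ℕ} {k : Fin r → ℕ} :
    k ∈ strictSeqs r n ↔ ∑ i, k i = n ∧ StrictAnti k := by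
  simp [strictSeqs]

theorem alternant_comp_perm {A : Type*} [CommRing A] {r : ℕ} (a : Fin r → A) (k : Fin r → ℕ)
    (τ : Equiv.Perm (Fin r)) :
    alternant a (k ∘ τ) = (Equiv.Perm.sign τ : ℤ) * alternant a k :=
  Matrix.det_permute' τ (Matrix.of fun i j : Fin r => a i ^ k j)

theorem alternant_eq_zero {A : Type*} [CommRing A] {r : ℕ} (a : Fin r → A) (k : Fin r → ℕ)
    (hk : ¬ Function.Injective k) : alternant a k = 0 := by
  simp only [Function.Injective, not_forall] at hk
  obtain ⟨i, j, h, hij⟩ := hk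
  exact Matrix.det_zero_of_column_eq hij fun l => by simp [h]

theorem exists_strictAnti_comp {r : ℕ} (k : Fin r → ℕ) (hk : Function.Injective k) :
    ∃ (κ : Fin r → ℕ) (τ : Equiv.Perm (Fin r)), StrictAnti κ ∧ κ ∘ τ = k := by
  refine ⟨k ∘ Tuple.sort k ∘ Fin.rev, (Fin.revPerm.trans (Tuple.sort k)).symm, ?_, ?_⟩
  · have h1 : StrictMono (k ∘ Tuple.sort k) :=
      (Tuple.monotone_sort k).strictMono_of_injective (hk.comp (Tuple.sort k).injective)
    intro i j hij
    exact h1 (Fin.rev_lt_rev.2 hij)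
  · ext i
    have := (Fin.revPerm.trans (Tuple.sort k)).apply_symm_apply i
    simp only [Equiv.trans_apply, Fin.revPerm_apply] at this
    simp only [Function.comp_apply, this]

/-- The sum over all tuples collapses to strictly decreasing ones: tuples with a repeated entry
contribute zero, and every other tuple is a unique rearrangement of a decreasing one. -/
theorem sum_piAntidiag_alternant {A : Type*} [CommRing A] {r : ℕ} (a b : Fin r → A) (n : ℕ) :
    ∑ k ∈ Finset.piAntidiag (Finset.univ : Finset (Fin r)) n,
        (∏ i, b i ^ k i) * alternant a k
      = ∑ κ ∈ strictSeqs r n, alternant a κ * alternant b κ := by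
  classical
  have hR : ∀ κ : Fin r → ℕ, alternant a κ * alternant b κ
      = ∑ τ : Equiv.Perm (Fin r), (∏ i, b i ^ (κ ∘ τ) i) * alternant a (κ ∘ τ) := by
    intro κ
    have : alternant b κ = ∑ τ : Equiv.Perm (Fin r),
        ((Equiv.Perm.sign τ : ℤ) : A) * ∏ i, b i ^ (κ ∘ τ) i := by
      rw [alternant, ← Matrix.det_transpose, Matrix.det_apply']
      rfl
    rw [this, Finset.mul_sum]
    refine Finset.sum_congr rfl fun τ _ => ?_
    rw [alternant_comp_perm]
    ring
  simp_rw [hR]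
  rw [← Finset.sum_product', ← Finset.sum_filter_of_ne (p := Function.Injective)]
  · symm
    refine Finset.sum_bij (fun p _ => p.1 ∘ p.2) ?_ ?_ ?_ ?_
    · rintro ⟨κ, τ⟩ h
      simp only [Finset.mem_product, mem_strictSeqs, Finset.mem_univ, and_true] at h
      simp only [Finset.mem_filter, Finset.mem_piAntidiag, Finset.mem_univ, implies_true, and_true]
      exact ⟨by rw [← h.1]; exact Equiv.sum_comp τ κ, h.2.injective.comp τ.injective⟩
    · rintro ⟨κ, τ⟩ h ⟨κ', τ'⟩ h' heq
      simp only [Finset.mem_product, mem_strictSeqs, Finset.mem_univ, and_true] at h h' heq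
      have h1 : κ ∘ (τ * τ'⁻¹ : Equiv.Perm (Fin r)) = κ' := by
        ext i
        have := congrFun heq (τ'⁻¹ i)
        simpa using this
      have h2 : κ ∘ (τ * τ'⁻¹ : Equiv.Perm (Fin r)) = κ ∘ (1 : Equiv.Perm (Fin r)) :=
        Tuple.unique_antitone (by rw [h1]; exact h'.2.antitone) (by exact h.2.antitone)
      have h3 : κ = κ' := by rw [← h1, h2]; rfl
      subst h3
      have : τ = τ' := Equiv.ext fun i => h.2.injective (congrFun heq i)
      rw [this]
    · intro k hk
      simp only [Finset.mem_filter, Finset.mem_piAntidiag] at hk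
      obtain ⟨κ, τ, h1, h2⟩ := exists_strictAnti_comp k hk.2
      refine ⟨(κ, τ), ?_, h2⟩
      simp only [Finset.mem_product, mem_strictSeqs, Finset.mem_univ, and_true]
      refine ⟨?_, h1⟩
      rw [← hk.1.1, ← h2]
      exact (Equiv.sum_comp τ κ).symm
    · intros; rfl
  · intro k _ hk
    by_contra h
    exact hk (by rw [alternant_eq_zero a k h, mul_zero])

theorem coeff_prod_mk_pow {A : Type*} [CommRing A] {r : ℕ} (c : Fin r → A) (n : ℕ) :
    PowerSeries.coeff n (∏ i, PowerSeries.mk fun k => c i ^ k)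
      = ∑ k ∈ Finset.piAntidiag (Finset.univ : Finset (Fin r)) n, ∏ i, c i ^ k i := by
  classical
  rw [PowerSeries.coeff_prod]
  refine Finset.sum_bij' (fun l _ => (l : Fin r → ℕ))
    (fun k _ => Finsupp.equivFunOnFinite.symm k) ?_ ?_ ?_ ?_ ?_ <;> simp

theorem coeff_det_geometric {A : Type*} [CommRing A] {r : ℕ} (a b : Fin r → A) (n : ℕ) :
    PowerSeries.coeff n (Matrix.of fun i j : Fin r =>
        PowerSeries.mk fun k => (a i * b j) ^ k).det
      = ∑ κ ∈ strictSeqs r n, alternant a κ * alternant b κ := by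
  rw [← sum_piAntidiag_alternant, Matrix.det_apply, map_sum]
  simp only [Units.smul_def, map_zsmul, Matrix.of_apply, coeff_prod_mk_pow]
  simp only [alternant, Matrix.det_apply, Units.smul_def, Finset.smul_sum, Finset.mul_sum,
    Matrix.of_apply]
  rw [Finset.sum_comm]
  refine Finset.sum_congr rfl fun k _ => Finset.sum_congr rfl fun σ _ => ?_
  simp only [mul_pow, Finset.prod_mul_distrib, mul_smul_comm]
  rw [mul_comm]

/-! ### Partitions with last part zero -/

/-- The partitions of `n` with at most `m` parts, as weakly decreasing sequences of length `m + 1`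
whose last entry is zero. -/
noncomputable def parts (m n : ℕ) : Finset (Fin (m + 1) → ℕ) :=
  open Classical in
  (Finset.piAntidiag Finset.univ n).filter fun k => Antitone k ∧ k (Fin.last m) = 0

theorem mem_parts {m n : ℕ} {k : Fin (m + 1) → ℕ} :
    k ∈ parts m n ↔ ∑ i, k i = n ∧ Antitone k ∧ k (Fin.last m) = 0 := by
  simp [parts]

/-- The staircase `(m, m - 1, …, 0)`. -/
def stair (m : ℕ) (j : Fin (m + 1)) : ℕ := m - j

theorem stair_le {m : ℕ} {k : Fin (m + 1) → ℕ} (hk : StrictAnti k) (j : Fin (m + 1)) :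
    stair m j ≤ k j := by
  induction j using Fin.reverseInduction with
  | last => simp [stair]
  | cast i ih =>
    have h := hk (Fin.castSucc_lt_succ (i := i))
    simp only [stair, Fin.val_succ, Fin.val_castSucc] at *
    omega

theorem strictAnti_add_stair {m : ℕ} {k : Fin (m + 1) → ℕ} (hk : Antitone k) :
    StrictAnti (k + stair m) := by
  rw [Fin.strictAnti_iff_succ_lt]
  intro i
  have h := hk (Fin.castSucc_lt_succ (i := i)).le
  have := i.2
  simp only [stair, Pi.add_apply, Fin.val_succ, Fin.val_castSucc]
  omega

theorem antitone_sub_stair {m : ℕ} {k : Fin (m + 1) → ℕ} (hk : StrictAnti k) :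
    Antitone (k - stair m) := by
  rw [Fin.antitone_iff_succ_le]
  intro i
  have h := hk (Fin.castSucc_lt_succ (i := i))
  have := i.2
  simp only [stair, Pi.sub_apply, Fin.val_succ, Fin.val_castSucc]
  omega

theorem alternant_add_one {A : Type*} [CommRing A] {r : ℕ} (a : Fin r → A) (k : Fin r → ℕ) :
    alternant a (k + 1) = (∏ i, a i) * alternant a k := by
  rw [alternant, alternant, ← Matrix.det_mul_column]
  congr 1
  ext i j
  simp [pow_succ']

theorem sum_strictSeqs_last_ne {A : Type*} [CommRing A] {m : ℕ} (a b : Fin (m + 1) → A) (n : ℕ) :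
    ∑ κ ∈ (strictSeqs (m + 1) n).filter (fun κ => ¬ κ (Fin.last m) = 0),
        alternant a κ * alternant b κ
      = if m + 1 ≤ n then (∏ i, a i) * (∏ i, b i) *
          ∑ κ ∈ strictSeqs (m + 1) (n - (m + 1)), alternant a κ * alternant b κ else 0 := by
  have hpos : ∀ κ ∈ (strictSeqs (m + 1) n).filter (fun κ => ¬ κ (Fin.last m) = 0),
      (κ - 1) + 1 = κ := by
    intro κ hκ
    simp only [Finset.mem_filter, mem_strictSeqs] at hκ
    ext i
    have := hκ.1.2.antitone (Fin.le_last i)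
    simp only [Pi.add_apply, Pi.sub_apply, Pi.one_apply]
    omega
  have hsum : ∀ κ : Fin (m + 1) → ℕ, ∑ i, (κ + 1) i = ∑ i, κ i + (m + 1) := by
    intro κ
    simp [Finset.sum_add_distrib]
  split_ifs with hn
  · rw [Finset.mul_sum]
    refine Finset.sum_bij' (fun κ _ => κ - 1) (fun κ _ => κ + 1) ?_ ?_ ?_ ?_ ?_
    · intro κ hκ
      have h1 := hpos κ hκ
      have h2 := hsum (κ - 1)
      rw [h1] at h2
      simp only [Finset.mem_filter, mem_strictSeqs] at hκ
      rw [mem_strictSeqs]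
      refine ⟨by omega, fun i j hij => ?_⟩
      have h3 := hκ.1.2 hij
      have h4 := hκ.1.2.antitone (Fin.le_last j)
      simp only [Pi.sub_apply, Pi.one_apply]
      omega
    · intro κ hκ
      rw [mem_strictSeqs] at hκ
      simp only [Finset.mem_filter, mem_strictSeqs]
      refine ⟨⟨by rw [hsum]; omega, fun i j hij => ?_⟩, by simp⟩
      have := hκ.2 hij
      simpa using this
    · exact hpos
    · intro κ _
      ext i
      simp
    · intro κ hκ
      conv_lhs => rw [← hpos κ hκ]
      rw [alternant_add_one, alternant_add_one]
      ring
  · refine Finset.sum_eq_zero fun κ hκ => ?_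
    have h2 := hsum (κ - 1)
    rw [hpos κ hκ] at h2
    simp only [Finset.mem_filter, mem_strictSeqs] at hκ
    omega

theorem sum_strictSeqs_last_eq {A : Type*} [AddCommMonoid A] {m : ℕ} (f : (Fin (m + 1) → ℕ) → A)
    (n : ℕ) :
    ∑ κ ∈ (strictSeqs (m + 1) n).filter (fun κ => κ (Fin.last m) = 0), f κ
      = if ∑ j, stair m j ≤ n then
          ∑ ξ ∈ parts m (n - ∑ j, stair m j), f (ξ + stair m) else 0 := by
  have hpos : ∀ κ ∈ (strictSeqs (m + 1) n).filter (fun κ => κ (Fin.last m) = 0),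
      (κ - stair m) + stair m = κ := by
    intro κ hκ
    simp only [Finset.mem_filter, mem_strictSeqs] at hκ
    ext i
    have := stair_le hκ.1.2 i
    simp only [Pi.add_apply, Pi.sub_apply]
    omega
  have hsum : ∀ κ : Fin (m + 1) → ℕ,
      ∑ i, (κ + stair m) i = ∑ i, κ i + ∑ j, stair m j := by
    intro κ
    simp [Finset.sum_add_distrib]
  split_ifs with hn
  · refine Finset.sum_bij' (fun κ _ => κ - stair m) (fun κ _ => κ + stair m) ?_ ?_ ?_ ?_ ?_
    · intro κ hκ
      have h2 := hsum (κ - stair m)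
      rw [hpos κ hκ] at h2
      simp only [Finset.mem_filter, mem_strictSeqs] at hκ
      rw [mem_parts]
      exact ⟨by omega, antitone_sub_stair hκ.1.2, by simp [hκ.2]⟩
    · intro κ hκ
      rw [mem_parts] at hκ
      simp only [Finset.mem_filter, mem_strictSeqs]
      exact ⟨⟨by rw [hsum]; omega, strictAnti_add_stair hκ.2.1⟩, by simp [hκ.2.2, stair]⟩
    · exact hpos
    · intro κ _
      ext i
      simp
    · intro κ hκ
      rw [hpos κ hκ]
  · refine Finset.sum_eq_zero fun κ hκ => ?_
    have h2 := hsum (κ - stair m)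
    rw [hpos κ hκ] at h2
    simp only [Finset.mem_filter, mem_strictSeqs] at hκ
    omega

open PowerSeries in
/-- Adding one to every entry of `κ` multiplies the product of alternants by `∏ a_i * ∏ b_i`, so
the factor on the left cancels all decreasing sequences except those ending in zero. -/
theorem one_sub_mul_sum_strictSeqs {A : Type*} [CommRing A] {m : ℕ} (a b : Fin (m + 1) → A) :
    (1 - C ((∏ i, a i) * ∏ i, b i) * X ^ (m + 1)) *
        mk (fun n => ∑ κ ∈ strictSeqs (m + 1) n, alternant a κ * alternant b κ)
      = X ^ (∑ j, stair m j) * mk (fun n => ∑ ξ ∈ parts m n,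
          alternant a (ξ + stair m) * alternant b (ξ + stair m)) := by
  ext n
  rw [sub_mul, one_mul, map_sub, mul_assoc, coeff_C_mul, coeff_X_pow_mul', coeff_X_pow_mul']
  simp only [coeff_mk]
  rw [← sum_strictSeqs_last_eq (fun κ => alternant a κ * alternant b κ) n,
    ← Finset.sum_filter_add_sum_filter_not (strictSeqs (m + 1) n) (fun κ => κ (Fin.last m) = 0),
    sum_strictSeqs_last_ne]
  split_ifs <;> simp

open PowerSeries in
theorem prod_mul_sum_strictSeqs {A : Type*} [CommRing A] {m : ℕ} (a b : Fin (m + 1) → A) :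
    (∏ i, ∏ j, (1 - C (a i) * (C (b j) * X))) *
        mk (fun n => ∑ κ ∈ strictSeqs (m + 1) n, alternant a κ * alternant b κ)
      = X ^ (∑ j, stair m j) * C ((∏ i, ∏ j ∈ Finset.Ioi i, (a j - a i)) *
          ∏ i, ∏ j ∈ Finset.Ioi i, (b j - b i)) := by
  have hdet : mk (fun n => ∑ κ ∈ strictSeqs (m + 1) n, alternant a κ * alternant b κ)
      = (Matrix.of fun i j : Fin (m + 1) => mk fun k => (a i * b j) ^ k).det := by
    ext n
    rw [coeff_det_geometric, coeff_mk]
  have he : ∀ i j, (mk fun k => (a i * b j) ^ k) * (1 - C (a i) * (C (b j) * X)) = 1 := by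
    intro i j
    ext n
    have : (mk fun k => (a i * b j) ^ k) * (1 - C (a i) * (C (b j) * X))
        = (mk fun k => (a i * b j) ^ k) - C (a i * b j) * ((mk fun k => (a i * b j) ^ k) * X) := by
      rw [map_mul]; ring
    rw [this, map_sub, coeff_C_mul]
    cases n with
    | zero => simp
    | succ n => simp [coeff_succ_mul_X, coeff_one, pow_succ']
  have hb : ∏ i : Fin (m + 1), ∏ j ∈ Finset.Ioi i, (C (b j) * X - C (b i) * X)
      = X ^ (∑ j, stair m j) * C (∏ i, ∏ j ∈ Finset.Ioi i, (b j - b i)) := by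
    simp only [← sub_mul, Finset.prod_mul_distrib, Finset.prod_const, Fin.card_Ioi, map_prod,
      map_sub, Finset.prod_pow_eq_pow_sum, stair, Nat.add_sub_cancel]
    rw [mul_comm]
  have hP : (∏ i, ∏ j, (1 - C (a i) * (C (b j) * X))) *
      ∏ i : Fin (m + 1), ∏ j : Fin (m + 1), (mk fun k => (a i * b j) ^ k) = 1 := by
    simp only [← Finset.prod_mul_distrib, mul_comm (1 - _ : PowerSeries A), he,
      Finset.prod_const_one]
  rw [hdet, det_cauchy_inv (m + 1) (fun i => C (a i)) (fun j => C (b j) * X)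
    (fun i j => mk fun k => (a i * b j) ^ k) he, ← mul_assoc, hP, one_mul, hb]
  simp only [map_mul, map_prod, map_sub]
  ring

/-! ### The graded identity -/

theorem prod_Ioi_mul_prod_Ioi {A : Type*} [CommRing A] {r : ℕ} (a b : Fin r → A) :
    (∏ i, ∏ j ∈ Finset.Ioi i, (a j - a i)) * ∏ i, ∏ j ∈ Finset.Ioi i, (b j - b i)
      = (∏ p ∈ Finset.univ.filter (fun p : Fin r × Fin r => p.1 < p.2), (a p.1 - a p.2)) *
        ∏ p ∈ Finset.univ.filter (fun p : Fin r × Fin r => p.1 < p.2), (b p.1 - b p.2) := by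
  have hIoi : ∀ i : Fin r, Finset.Ioi i = Finset.univ.filter (fun j => i < j) := by
    intro i
    ext j
    simp
  simp only [← Finset.prod_mul_distrib, Finset.prod_filter, hIoi, ← Finset.univ_product_univ,
    Finset.prod_product]
  refine Finset.prod_congr rfl fun i _ => Finset.prod_congr rfl fun j _ => ?_
  split_ifs
  · ring
  · rfl

open PowerSeries in
/-- The identity over a domain, with an extra variable `X` recording the degree of the partition.
Here `sa` and `sb` are any families obeying the bialternant formula in `a` and in `b`. -/
theorem graded_identity {A : Type*} [CommRing A] [IsDomain A] {m : ℕ} (a b : Fin (m + 1) → A)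
    (va vb : A) (sa sb : (Fin (m + 1) → ℕ) → A)
    (hva : va = ∏ p ∈ Finset.univ.filter (fun p : Fin (m + 1) × Fin (m + 1) => p.1 < p.2),
      (a p.1 - a p.2))
    (hvb : vb = ∏ p ∈ Finset.univ.filter (fun p : Fin (m + 1) × Fin (m + 1) => p.1 < p.2),
      (b p.1 - b p.2))
    (hva0 : va ≠ 0) (hvb0 : vb ≠ 0)
    (ha : ∀ ξ, sa ξ * va = alternant a (ξ + stair m))
    (hb : ∀ ξ, sb ξ * vb = alternant b (ξ + stair m)) :
    (∏ i, ∏ j, (1 - C (a i) * (C (b j) * X))) * mk (fun n => ∑ ξ ∈ parts m n, sa ξ * sb ξ)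
      = 1 - C ((∏ i, a i) * ∏ i, b i) * X ^ (m + 1) := by
  have h1 := one_sub_mul_sum_strictSeqs a b
  have h2 := prod_mul_sum_strictSeqs a b
  rw [prod_Ioi_mul_prod_Ioi, ← hva, ← hvb] at h2
  have h3 : mk (fun n => ∑ ξ ∈ parts m n, alternant a (ξ + stair m) * alternant b (ξ + stair m))
      = C (va * vb) * mk (fun n => ∑ ξ ∈ parts m n, sa ξ * sb ξ) := by
    ext n
    simp only [coeff_C_mul, coeff_mk, Finset.mul_sum, ← ha, ← hb]
    exact Finset.sum_congr rfl fun _ _ => by ring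
  rw [h3] at h1
  have hne : (X ^ (∑ j, stair m j) * C (va * vb) : PowerSeries A) ≠ 0 := by
    refine mul_ne_zero (pow_ne_zero _ X_ne_zero) ?_
    rw [Ne, map_eq_zero_iff _ (PowerSeries.C_injective)]
    exact mul_ne_zero hva0 hvb0
  refine mul_left_cancel₀ hne ?_
  linear_combination (-(∏ i, ∏ j, (1 - C (a i) * (C (b j) * X)))) * h1 +
    (1 - C ((∏ i, a i) * ∏ i, b i) * X ^ (m + 1)) * h2

/-! ### Forgetting the grading -/

/-- The power series whose coefficient at `d` is read off from the coefficient of `F` in degree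
equal to the `x`-degree of `d`. When the `n`-th coefficient of `F` is homogeneous of `x`-degree `n`
for all `n`, this is `F` evaluated at `1`. -/
noncomputable def ungrade {r : ℕ} (F : PowerSeries (MvPolynomial (Fin r ⊕ Fin r) ℤ)) :
    MvPowerSeries (Fin r ⊕ Fin r) ℤ :=
  fun d => MvPolynomial.coeff d (PowerSeries.coeff (∑ i, d (Sum.inl i)) F)

theorem coeff_ungrade {r : ℕ} (F : PowerSeries (MvPolynomial (Fin r ⊕ Fin r) ℤ))
    (d : Fin r ⊕ Fin r →₀ ℕ) : MvPowerSeries.coeff d (ungrade F)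
      = MvPolynomial.coeff d (PowerSeries.coeff (∑ i, d (Sum.inl i)) F) := rfl

/-- Multiplication by `p` becomes multiplication by `q` under `ungrade`. -/
def Ungrades {r : ℕ} (p : PowerSeries (MvPolynomial (Fin r ⊕ Fin r) ℤ))
    (q : MvPowerSeries (Fin r ⊕ Fin r) ℤ) : Prop :=
  ∀ G, ungrade (p * G) = q * ungrade G

theorem Ungrades.one {r : ℕ} : Ungrades (r := r) 1 1 := fun G => by simp

theorem Ungrades.mul {r : ℕ} {p p' : PowerSeries (MvPolynomial (Fin r ⊕ Fin r) ℤ)}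
    {q q' : MvPowerSeries (Fin r ⊕ Fin r) ℤ} (h : Ungrades p q) (h' : Ungrades p' q') :
    Ungrades (p * p') (q * q') := fun G => by rw [mul_assoc, h, h', mul_assoc]

theorem Ungrades.sub {r : ℕ} {p p' : PowerSeries (MvPolynomial (Fin r ⊕ Fin r) ℤ)}
    {q q' : MvPowerSeries (Fin r ⊕ Fin r) ℤ} (h : Ungrades p q) (h' : Ungrades p' q') :
    Ungrades (p - p') (q - q') := fun G => by
  rw [sub_mul, sub_mul, ← h, ← h']
  ext d
  simp [coeff_ungrade]

theorem Ungrades.prod {r : ℕ} {ι : Type*} (s : Finset ι)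
    {p : ι → PowerSeries (MvPolynomial (Fin r ⊕ Fin r) ℤ)}
    {q : ι → MvPowerSeries (Fin r ⊕ Fin r) ℤ} (h : ∀ i, Ungrades (p i) (q i)) :
    Ungrades (∏ i ∈ s, p i) (∏ i ∈ s, q i) := by
  classical
  induction s using Finset.induction_on with
  | empty => simpa using Ungrades.one
  | insert i s hi ih =>
    rw [Finset.prod_insert hi, Finset.prod_insert hi]
    exact (h i).mul ih

theorem Ungrades.inl {r : ℕ} (i : Fin r) :
    Ungrades (PowerSeries.C (MvPolynomial.X (Sum.inl i)) * PowerSeries.X)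
      (MvPowerSeries.X (Sum.inl i)) := by
  classical
  intro G
  ext d
  rw [MvPowerSeries.X, MvPowerSeries.coeff_monomial_mul, coeff_ungrade, mul_assoc,
    PowerSeries.coeff_C_mul, MvPolynomial.X, MvPolynomial.coeff_monomial_mul', coeff_ungrade]
  split_ifs with h
  · have hd : ∑ j, d (Sum.inl j)
        = ∑ j, (d - Finsupp.single (Sum.inl i) 1 : Fin r ⊕ Fin r →₀ ℕ) (Sum.inl j) + 1 := by
      obtain ⟨e, rfl⟩ := exists_add_of_le h
      rw [add_tsub_cancel_left]
      simp [Finset.sum_add_distrib, Finsupp.single_apply, add_comm]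
    rw [hd, PowerSeries.coeff_succ_X_mul]
  · rfl

theorem Ungrades.inr {r : ℕ} (j : Fin r) :
    Ungrades (PowerSeries.C (MvPolynomial.X (Sum.inr j))) (MvPowerSeries.X (Sum.inr j)) := by
  classical
  intro G
  ext d
  rw [MvPowerSeries.X, MvPowerSeries.coeff_monomial_mul, coeff_ungrade,
    PowerSeries.coeff_C_mul, MvPolynomial.X, MvPolynomial.coeff_monomial_mul', coeff_ungrade]
  split_ifs with h
  · have hd : ∑ i, d (Sum.inl i) = ∑ i, (d - Finsupp.single (Sum.inr j) 1 : Fin r ⊕ Fin r →₀ ℕ) (Sum.inl i) := by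
      simp
    rw [hd]
  · rfl

theorem ungrade_one {r : ℕ} : ungrade (r := r) 1 = 1 := by
  classical
  ext d
  rw [coeff_ungrade, PowerSeries.coeff_one, MvPowerSeries.coeff_one]
  by_cases hd : d = 0
  · simp [hd]
  · split_ifs
    · simp [MvPolynomial.coeff_one, Ne.symm hd]
    · simp

theorem schurSum2_eq_ungrade (m : ℕ) (s : (Fin (m + 1) → ℕ) → MvPolynomial (Fin (m + 1)) ℤ) :
    schurSum2 (m + 1) s = ungrade (PowerSeries.mk fun n => ∑ ξ ∈ parts m n,
      MvPolynomial.rename Sum.inl (s ξ) * MvPolynomial.rename Sum.inr (s ξ)) := by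
  ext d
  rw [coeff_ungrade, PowerSeries.coeff_mk, MvPolynomial.coeff_sum]
  change schurSum2 (m + 1) s d = _
  rw [schurSum2, ← Finset.sum_filter]
  refine Finset.sum_bij (fun ξ _ j => (ξ j : ℕ)) ?_ ?_ ?_ ?_
  · intro ξ hξ
    simp only [Finset.mem_filter, Finset.mem_univ, true_and] at hξ
    rw [mem_parts]
    exact ⟨hξ.2.2, fun i j hij => hξ.1 i j hij, hξ.2.1 (by omega)⟩
  · intro ξ _ ξ' _ h
    funext j
    exact Fin.ext (congrFun h j)
  · intro k hk
    rw [mem_parts] at hk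
    refine ⟨fun j => ⟨k j, ?_⟩, ?_, rfl⟩
    · have := Finset.single_le_sum (f := k) (fun i _ => Nat.zero_le _) (Finset.mem_univ j)
      omega
    · simp only [Finset.mem_filter, Finset.mem_univ, true_and]
      exact ⟨fun i j hij => hk.2.1 hij, fun _ => hk.2.2, hk.1⟩
  · intros; rfl

theorem vdm_ne_zero (r : ℕ) : vdm r ≠ 0 := by
  refine Finset.prod_ne_zero_iff.2 fun p hp => sub_ne_zero.2 fun h => ?_
  simp only [Finset.mem_filter] at hp
  exact hp.2.ne (MvPolynomial.X_injective h)

theorem rename_det_schurMat {m : ℕ} {σ : Type*} (f : Fin (m + 1) → σ) (ξ : Fin (m + 1) → ℕ) :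
    MvPolynomial.rename f (schurMat (m + 1) ξ).det
      = alternant (fun i => (MvPolynomial.X (f i) : MvPolynomial σ ℤ)) (ξ + stair m) := by
  rw [AlgHom.map_det, alternant]
  congr 1
  ext i j : 2
  simp [schurMat, stair]

/-- As formal power series in `x₁,…,x_r,y₁,…,y_r` over `ℤ`:
`(1 - x₁⋯x_r·y₁⋯y_r)/∏_{i,j}(1 - x_i y_j) = Σ_{λ ∈ Par(r-1)} s_λ(x)·s_λ(y)`. -/
theorem stmt4 (r : ℕ) (hr : 0 < r) (s : (Fin r → ℕ) → MvPolynomial (Fin r) ℤ)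
    (hs : ∀ ξ : Fin r → ℕ, SchurDef r ξ (s ξ)) :
    (∏ i : Fin r, ∏ j : Fin r,
        (1 - MvPowerSeries.X (Sum.inl i) * MvPowerSeries.X (Sum.inr j))) * schurSum2 r s
      = 1 - (∏ i : Fin r, MvPowerSeries.X (Sum.inl i)) *
          ∏ j : Fin r, MvPowerSeries.X (Sum.inr j) := by
  obtain ⟨m, rfl⟩ : ∃ m, r = m + 1 := ⟨r - 1, by omega⟩
  have key := graded_identity (m := m)
    (fun i => (MvPolynomial.X (Sum.inl i) : MvPolynomial (Fin (m + 1) ⊕ Fin (m + 1)) ℤ))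
    (fun i => (MvPolynomial.X (Sum.inr i) : MvPolynomial (Fin (m + 1) ⊕ Fin (m + 1)) ℤ))
    (MvPolynomial.rename Sum.inl (vdm (m + 1))) (MvPolynomial.rename Sum.inr (vdm (m + 1)))
    (fun ξ => MvPolynomial.rename Sum.inl (s ξ)) (fun ξ => MvPolynomial.rename Sum.inr (s ξ))
    (by simp [vdm]) (by simp [vdm])
    ((map_ne_zero_iff _ (MvPolynomial.rename_injective _ Sum.inl_injective)).2 (vdm_ne_zero _))
    ((map_ne_zero_iff _ (MvPolynomial.rename_injective _ Sum.inr_injective)).2 (vdm_ne_zero _))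
    (fun ξ => by rw [← map_mul, hs ξ, rename_det_schurMat])
    (fun ξ => by rw [← map_mul, hs ξ, rename_det_schurMat])
  have hL : Ungrades (r := m + 1)
      (∏ i : Fin (m + 1), ∏ j : Fin (m + 1),
        (1 - PowerSeries.C (MvPolynomial.X (Sum.inl i)) *
          (PowerSeries.C (MvPolynomial.X (Sum.inr j)) * PowerSeries.X)))
      (∏ i : Fin (m + 1), ∏ j : Fin (m + 1),
        (1 - MvPowerSeries.X (Sum.inl i) * MvPowerSeries.X (Sum.inr j))) := by
    refine Ungrades.prod _ fun i => Ungrades.prod _ fun j => Ungrades.one.sub ?_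
    convert (Ungrades.inl i).mul (Ungrades.inr j) using 1
    ring
  have hR : Ungrades (r := m + 1)
      (1 - PowerSeries.C ((∏ i : Fin (m + 1), MvPolynomial.X (Sum.inl i)) *
        ∏ j : Fin (m + 1), MvPolynomial.X (Sum.inr j)) * PowerSeries.X ^ (m + 1))
      (1 - (∏ i : Fin (m + 1), MvPowerSeries.X (Sum.inl i)) *
          ∏ j : Fin (m + 1), MvPowerSeries.X (Sum.inr j)) := by
    refine Ungrades.one.sub ?_
    convert (Ungrades.prod Finset.univ fun i => Ungrades.inl i).mul
      (Ungrades.prod Finset.univ fun j => Ungrades.inr (r := m + 1) j) using 1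
    simp only [Finset.prod_mul_distrib, Finset.prod_const, Finset.card_univ, Fintype.card_fin,
      map_mul, map_prod]
    ring
  rw [schurSum2_eq_ungrade, ← hL, key, ← mul_one (1 - _ * _ : PowerSeries _), hR, ungrade_one,
    mul_one]
end
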